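/- Let M = [a_ij] (1 ≤ i, j ≤ 2) be a 2×2 matrix with nonnegative real entries. Then M is convergent to zero if and only if a11 < 1, a22 < 1, and a11 + a22 < 1 + a11·a22 − a12·a21. -/

import Mathlib

open Filter

/-- A square matrix with nonnegative real entries is *convergent to zero* if its powers
tend to the zero matrix. -/
def ConvergentToZero {n : ℕ} (M : Matrix (Fin n) (Fin n) ℝ) : Prop :=
  Tendsto (fun k : ℕ => M ^ k) atTop (nhds 0)

theorem Matrix.mulVec_mono_of_nonneg {n : ℕ} {M : Matrix (Fin n) (Fin n) ℝ}
    (hM : ∀ i j, 0 ≤ M i j) {v w : Fin n → ℝ} (h : v ≤ w) : M.mulVec v ≤ M.mulVec w :=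
  fun i => dotProduct_le_dotProduct_of_nonneg_left h (hM i)

theorem Matrix.pow_nonneg_entries {n : ℕ} {M : Matrix (Fin n) (Fin n) ℝ}
    (hM : ∀ i j, 0 ≤ M i j) (k : ℕ) (i j : Fin n) : 0 ≤ (M ^ k) i j := by
  induction k generalizing i j with
  | zero => rw [pow_zero, Matrix.one_apply]; split_ifs <;> norm_num
  | succ k ih =>
    rw [pow_succ, Matrix.mul_apply]
    exact Finset.sum_nonneg fun l _ => mul_nonneg (ih i l) (hM l j)

/-- A nonnegative matrix which contracts a positive vector is convergent to zero. -/
theorem ConvergentToZero.of_mulVec_le {n : ℕ} {M : Matrix (Fin n) (Fin n) ℝ}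
    (hM : ∀ i j, 0 ≤ M i j) {v : Fin n → ℝ} (hv : ∀ i, 0 < v i) {r : ℝ} (hr₀ : 0 ≤ r)
    (hr₁ : r < 1) (h : M.mulVec v ≤ r • v) : ConvergentToZero M := by
  have hpow (k : ℕ) : (M ^ k).mulVec v ≤ r ^ k • v := by
    induction k with
    | zero => simp
    | succ k ih =>
      calc (M ^ (k + 1)).mulVec v = (M ^ k).mulVec (M.mulVec v) := by
            rw [pow_succ, Matrix.mulVec_mulVec]
        _ ≤ (M ^ k).mulVec (r • v) :=
            Matrix.mulVec_mono_of_nonneg (Matrix.pow_nonneg_entries hM k) h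
        _ = r • (M ^ k).mulVec v := Matrix.mulVec_smul _ _ _
        _ ≤ r • r ^ k • v := smul_le_smul_of_nonneg_left ih hr₀
        _ = r ^ (k + 1) • v := by rw [smul_smul, pow_succ']
  refine tendsto_pi_nhds.2 fun i => tendsto_pi_nhds.2 fun j => ?_
  have hlim : Tendsto (fun k : ℕ => r ^ k * (v i / v j)) atTop (nhds 0) := by
    simpa using (tendsto_pow_atTop_nhds_zero_of_lt_one hr₀ hr₁).mul_const (v i / v j)
  refine squeeze_zero (fun k => Matrix.pow_nonneg_entries hM k i j) (fun k => ?_) hlim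
  rw [← mul_div_assoc, le_div_iff₀ (hv j)]
  exact (Finset.single_le_sum (f := fun l => (M ^ k) i l * v l)
    (fun l _ => mul_nonneg (Matrix.pow_nonneg_entries hM k i l) (hv l).le)
    (Finset.mem_univ j)).trans (hpow k i)

/-- If a nonnegative matrix convergent to zero does not decrease `v`, then `v` is nonpositive. -/
theorem ConvergentToZero.nonpos_of_le_mulVec {n : ℕ} {M : Matrix (Fin n) (Fin n) ℝ}
    (hM : ∀ i j, 0 ≤ M i j) (hconv : ConvergentToZero M) {v : Fin n → ℝ}
    (h : v ≤ M.mulVec v) : v ≤ 0 := by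
  have hpow (k : ℕ) : v ≤ (M ^ k).mulVec v := by
    induction k with
    | zero => simp
    | succ k ih =>
      rw [pow_succ, ← Matrix.mulVec_mulVec]
      exact ih.trans (Matrix.mulVec_mono_of_nonneg (Matrix.pow_nonneg_entries hM k) h)
  have hlim : Tendsto (fun k : ℕ => (M ^ k).mulVec v) atTop (nhds 0) := by
    have hcont : Continuous fun A : Matrix (Fin n) (Fin n) ℝ => A.mulVec v := by fun_prop
    simpa [Function.comp_def] using (hcont.tendsto 0).comp hconv
  exact ge_of_tendsto' hlim hpow

/-- A nonnegative `2 × 2` matrix `M = [a_ij]` is convergent to zero if and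
only if `a11 < 1`, `a22 < 1` and `a11 + a22 < 1 + a11 * a22 - a12 * a21`. -/
theorem convergentToZero_two_by_two_iff (M : Matrix (Fin 2) (Fin 2) ℝ)
    (hM : ∀ i j, 0 ≤ M i j) :
    ConvergentToZero M ↔
      (M 0 0 < 1 ∧ M 1 1 < 1 ∧ M 0 0 + M 1 1 < 1 + M 0 0 * M 1 1 - M 0 1 * M 1 0) := by
  have hmulVec (x y : ℝ) :
      M.mulVec ![x, y] = ![M 0 0 * x + M 0 1 * y, M 1 0 * x + M 1 1 * y] := by
    ext i
    fin_cases i <;> simp [Matrix.mulVec, dotProduct, Fin.sum_univ_two]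
  constructor
  · intro hconv
    have key (x y : ℝ) (h₀ : x ≤ M 0 0 * x + M 0 1 * y) (h₁ : y ≤ M 1 0 * x + M 1 1 * y) :
        x ≤ 0 ∧ y ≤ 0 := by
      have hle : ![x, y] ≤ 0 := hconv.nonpos_of_le_mulVec hM <| by
        rw [hmulVec]
        intro i
        fin_cases i
        exacts [h₀, h₁]
      exact ⟨hle 0, hle 1⟩
    have h00 : M 0 0 < 1 := by
      by_contra! h
      linarith [(key 1 0 (by linarith) (by linarith [hM 1 0])).1]
    have h11 : M 1 1 < 1 := by
      by_contra! h
      linarith [(key 0 1 (by linarith [hM 0 1]) (by linarith)).2]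
    refine ⟨h00, h11, ?_⟩
    by_contra! h
    linarith [(key (M 0 1) (1 - M 0 0) (by linarith) (by linarith)).2]
  · rintro ⟨h00, h11, hdet⟩
    have h01 := hM 0 1
    have h10 := hM 1 0
    -- `(x, y)` is a positive multiple of `(1 - M)⁻¹ (1, 1)`
    obtain ⟨x, hx⟩ : ∃ x, x = 1 - M 1 1 + M 0 1 := ⟨_, rfl⟩
    obtain ⟨y, hy⟩ : ∃ y, y = 1 - M 0 0 + M 1 0 := ⟨_, rfl⟩
    have hx₀ : 0 < x := by linarith
    have hy₀ : 0 < y := by linarith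
    have hltx : M 0 0 * x + M 0 1 * y < x := by subst hx hy; linarith
    have hlty : M 1 0 * x + M 1 1 * y < y := by subst hx hy; linarith
    refine ConvergentToZero.of_mulVec_le hM (v := ![x, y])
      (r := max ((M 0 0 * x + M 0 1 * y) / x) ((M 1 0 * x + M 1 1 * y) / y)) ?_
      (le_max_of_le_left ?_) (max_lt ((div_lt_one hx₀).2 hltx) ((div_lt_one hy₀).2 hlty)) ?_
    · intro i
      fin_cases i
      exacts [hx₀, hy₀]
    · have := hM 0 0
      positivity
    · rw [hmulVec]
      intro i
      fin_cases i
      exacts [(div_le_iff₀ hx₀).1 (le_max_left _ _), (div_le_iff₀ hy₀).1 (le_max_right _ _)]
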